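/- arXiv:1210.4710 — 2 statements merged into one kernel-verified Lean document; each statement's English description precedes it below -/
import Mathlib

section
/- Let Δ = 2j−1 with j ≥ 2 and let G be a simple graph with no isolated vertices satisfying ν(G) = j, Δ(G) = Δ, and |E(G)| = (2j−1)j + j − 1. Then G has exactly one vertex of degree 2j−2, all other vertices have degree 2j−1, and G is unique up to isomorphism: it is obtained from K_{2j} minus a perfect matching by joining a new vertex to 2j−1 of the vertices. -/
open scoped Classical

/-- `M` is a matching of `G`, given as a finite set of edges. -/
def IsMatchingFinset {V : Type*} (G : SimpleGraph V) (M : Finset (Sym2 V)) : Prop :=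
  (M : Set (Sym2 V)) ⊆ G.edgeSet ∧
    ∀ e ∈ M, ∀ f ∈ M, e ≠ f → ∀ v : V, ¬(v ∈ e ∧ v ∈ f)

/-- ν(G): the maximum size of a matching of `G`. -/
noncomputable def matchingNumber {V : Type*} (G : SimpleGraph V) : ℕ :=
  sSup {n | ∃ M : Finset (Sym2 V), IsMatchingFinset G M ∧ M.card = n}

/-- A proper edge coloring of `G` using colors `< n`. -/
def IsProperEdgeColoring {V : Type*} (G : SimpleGraph V) (n : ℕ) (c : Sym2 V → ℕ) : Prop :=
  (∀ e ∈ G.edgeSet, c e < n) ∧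
    ∀ e ∈ G.edgeSet, ∀ f ∈ G.edgeSet, e ≠ f → (∃ v : V, v ∈ e ∧ v ∈ f) → c e ≠ c f

/-- χ'(G): the edge chromatic index of `G`. -/
noncomputable def chromaticIndex {V : Type*} (G : SimpleGraph V) : ℕ :=
  sInf {n | ∃ c : Sym2 V → ℕ, IsProperEdgeColoring G n c}

/-- `G` is friendly-edge-colorable: its edge set is partitioned into maximum matchings. -/
noncomputable def Friendly {V : Type*} [Fintype V] (G : SimpleGraph V) : Prop :=
  ∃ P : Finset (Finset (Sym2 V)),
    (∀ M ∈ P, IsMatchingFinset G M ∧ M.card = matchingNumber G) ∧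
    (∀ e, e ∈ G.edgeFinset ↔ ∃ M ∈ P, e ∈ M) ∧
    ∀ M ∈ P, ∀ N ∈ P, M ≠ N → Disjoint M N

/-- The graph `G` with vertex `x` deleted. -/
def delVert {V : Type*} (G : SimpleGraph V) (x : V) : SimpleGraph {v : V // v ≠ x} :=
  G.induce {v : V | v ≠ x}

/-- `G` has a perfect matching. -/
def HasPerfectMatchingFinset {V : Type*} (G : SimpleGraph V) : Prop :=
  ∃ M : Finset (Sym2 V), IsMatchingFinset G M ∧ ∀ v : V, ∃ e ∈ M, v ∈ e

/-- `G` is factor-critical. -/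
def FactorCritical {V : Type*} (G : SimpleGraph V) : Prop :=
  G.Connected ∧ ∀ x : V, HasPerfectMatchingFinset (delVert G x)

/-- The graph `𝒞` for odd maximum degree `2j-1`: `K_{2j}` minus a perfect matching
(the matching pairs `2i` with `2i+1`), together with a new vertex (vertex `2*j`)
joined to the `2j-1` vertices `0, …, 2j-2`. -/
def oddExtremalGraph (j : ℕ) : SimpleGraph (Fin (2 * j + 1)) :=
  SimpleGraph.fromRel (fun a b =>
    (a.val < 2 * j ∧ b.val < 2 * j ∧ a.val / 2 ≠ b.val / 2) ∨
    (a.val = 2 * j ∧ b.val < 2 * j - 1))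

/-!
By the Tutte–Berge formula some set `A` of vertices satisfies `|A| + ∑ C, ⌊|C| / 2⌋ ≤ j`, where
`C` ranges over the components of `G - A`. Each vertex of `A` covers at most `Δ = 2j - 1` edges, and
a component `C` spans at most `⌊|C| / 2⌋ Δ` edges unless `|C|` is odd and exceeds `Δ`. As `G` has
more than `jΔ` edges, there is a component with at least `2j + 1` vertices. It exhausts the bound,
so `A` is empty and all other components are single vertices, which are excluded; hence
`|V| = 2j + 1`. Now the degree sum is one less than `|V| Δ`, so exactly one vertex `v₀` has degree
`Δ - 1`.

In the complement `v₀` has degree `2` and all other vertices have degree `1`. Such a graph amounts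
to an involution with the marked fixed point `v₀`: it swaps the ends of the edges avoiding `v₀`, and
its remaining fixed points are the neighbours of `v₀`. Involutions with equally many fixed points on
sets of the same size are conjugate.
-/

section Matching

variable {V W : Type*} {G H : SimpleGraph V}

lemma IsMatchingFinset.card_le_matchingNumber [Finite V] {M : Finset (Sym2 V)}
    (hM : IsMatchingFinset G M) : M.card ≤ matchingNumber G := by
  cases nonempty_fintype V
  refine le_csSup ⟨G.edgeFinset.card, ?_⟩ ⟨M, hM, rfl⟩
  rintro _ ⟨N, hN, rfl⟩
  exact Finset.card_le_card fun e he => SimpleGraph.mem_edgeFinset.2 (hN.1 he)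

lemma ncard_edgeSet_le_matchingNumber [Finite V] (hHG : H ≤ G)
    (hH : ∀ u v w, H.Adj u v → H.Adj u w → v = w) : H.edgeSet.ncard ≤ matchingNumber G := by
  cases nonempty_fintype V
  have hM : IsMatchingFinset G H.edgeFinset := by
    refine ⟨by simpa using hHG, fun e he f hf hef u ⟨hue, huf⟩ => hef ?_⟩
    obtain ⟨v, rfl⟩ := hue
    obtain ⟨w, rfl⟩ := huf
    rw [hH u v w (by simpa using he) (by simpa using hf)]
  rw [Set.ncard_eq_toFinset_card']
  exact hM.card_le_matchingNumber

lemma ncard_edgeSet_le_mul_add_ncard_edgeSet_comap [Fintype V] (f : W ↪ V) {Δ : ℕ}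
    (hΔ : ∀ v ∉ Set.range f, G.degree v ≤ Δ) :
    G.edgeSet.ncard ≤ (Set.range f)ᶜ.ncard * Δ + (G.comap f).edgeSet.ncard := by
  have : Finite W := Finite.of_injective f f.injective
  let B : Finset V := (Set.range f)ᶜ.toFinset
  have hcover : G.edgeSet ⊆
      (B.biUnion fun v => G.incidenceFinset v : Set (Sym2 V)) ∪
        Sym2.map f '' (G.comap f).edgeSet := by
    refine Sym2.ind fun u v huv => ?_
    by_cases hu : u ∈ Set.range f
    · by_cases hv : v ∈ Set.range f
      · obtain ⟨u, rfl⟩ := hu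
        obtain ⟨v, rfl⟩ := hv
        exact .inr ⟨s(u, v), huv, rfl⟩
      · refine .inl (Finset.mem_coe.2 (Finset.mem_biUnion.2 ⟨v, by simpa [B] using hv, ?_⟩))
        exact (G.mem_incidenceFinset v _).2 ⟨huv, Sym2.mem_mk_right u v⟩
    · refine .inl (Finset.mem_coe.2 (Finset.mem_biUnion.2 ⟨u, by simpa [B] using hu, ?_⟩))
      exact (G.mem_incidenceFinset u _).2 ⟨huv, Sym2.mem_mk_left u v⟩
  calc G.edgeSet.ncard
      ≤ (B.biUnion fun v => G.incidenceFinset v : Set (Sym2 V)).ncard +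
          (Sym2.map f '' (G.comap f).edgeSet).ncard :=
        (Set.ncard_le_ncard hcover).trans (Set.ncard_union_le _ _)
    _ ≤ (Set.range f)ᶜ.ncard * Δ + (G.comap f).edgeSet.ncard := by
        refine Nat.add_le_add ?_ (Set.ncard_image_le (Set.toFinite _))
        rw [Set.ncard_coe_finset, Set.ncard_eq_toFinset_card']
        refine Finset.card_biUnion_le_card_mul _ _ _ fun v hv => ?_
        rw [G.card_incidenceFinset_eq_degree]
        exact hΔ v (by simpa [B] using hv)

lemma two_mul_ncard_edgeSet_of_isPerfectMatching [Finite V] {M : G.Subgraph}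
    (hM : M.IsPerfectMatching) : 2 * M.edgeSet.ncard = Nat.card V := by
  cases nonempty_fintype V
  have hdeg : ∀ v, M.spanningCoe.degree v = 1 := fun v =>
    (M.degree_spanningCoe v).trans (SimpleGraph.Subgraph.isPerfectMatching_iff_forall_degree.1 hM v)
  rw [← M.edgeSet_spanningCoe, ← SimpleGraph.coe_edgeFinset, Set.ncard_coe_finset,
    ← SimpleGraph.sum_degrees_eq_twice_card_edges]
  simp [hdeg]

lemma card_le_two_mul_matchingNumber_add_ncard_compl_range [Finite W] {J : SimpleGraph W}
    (f : G ↪g J) {M : J.Subgraph} (hM : M.IsPerfectMatching) :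
    Nat.card V ≤ 2 * matchingNumber G + (Set.range f)ᶜ.ncard := by
  cases nonempty_fintype W
  have : Finite V := Finite.of_injective f f.injective
  have hedges : M.edgeSet.ncard ≤ (Set.range f)ᶜ.ncard * 1 +
      (M.spanningCoe.comap f.toEmbedding).edgeSet.ncard := by
    rw [← M.edgeSet_spanningCoe]
    exact ncard_edgeSet_le_mul_add_ncard_edgeSet_comap f.toEmbedding fun v _ =>
      ((M.degree_spanningCoe v).trans
        (SimpleGraph.Subgraph.isPerfectMatching_iff_forall_degree.1 hM v)).le
  have hmatching : (M.spanningCoe.comap f.toEmbedding).edgeSet.ncard ≤ matchingNumber G :=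
    ncard_edgeSet_le_matchingNumber (fun u v h => f.map_adj_iff.1 (M.adj_sub h))
      fun u v w hv hw => f.injective (hM.1.eq_of_adj_left hv hw)
  have hcard : (Set.range f).ncard = Nat.card V := Set.ncard_range_of_injective f.injective
  have hcompl := Set.ncard_add_ncard_compl (Set.range f)
  have hM' := two_mul_ncard_edgeSet_of_isPerfectMatching hM
  omega

end Matching


section TutteBerge

variable {V W : Type*} {G : SimpleGraph V} {H : SimpleGraph W} {U : Set V}

lemma ncard_oddComponents_eq_of_iso (e : G ≃g H) :
    G.oddComponents.ncard = H.oddComponents.ncard := by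
  refine Nat.card_congr (e.connectedComponentEquiv.subtypeEquiv fun C => ?_)
  have hcard : C.supp.ncard = (e.connectedComponentEquiv C).supp.ncard :=
    Nat.card_congr (SimpleGraph.ConnectedComponent.isoEquivSupp e C)
  rw [Set.mem_ofPred_eq, Set.mem_ofPred_eq, hcard]

lemma isTutteViolator_iff :
    G.IsTutteViolator U ↔ U.ncard < (G.induce Uᶜ).oddComponents.ncard := by
  let e : ((⊤ : G.Subgraph).deleteVerts U).coe ≃g G.induce Uᶜ :=
    { toEquiv := Equiv.subtypeEquivRight fun v => by simp
      map_rel_iff' := by 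
        rintro ⟨u, _, hu⟩ ⟨v, _, hv⟩
        simp [hu, hv] }
  rw [SimpleGraph.IsTutteViolator, ncard_oddComponents_eq_of_iso e]

lemma universalVerts_subset_of_isTutteViolator [Finite V] (hV : Even (Nat.card V))
    (hU : G.IsTutteViolator U) : G.universalVerts ⊆ U := by
  intro v hv
  by_contra hvU
  rw [isTutteViolator_iff] at hU
  have hconn : (G.induce Uᶜ).Connected :=
    .of_isUniversal (v := ⟨v, hvU⟩) fun w hw => hv fun h => hw (Subtype.ext h)
  have hle : (G.induce Uᶜ).oddComponents.ncard ≤ 1 := by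
    have := hconn.preconnected.subsingleton_connectedComponent
    exact Set.ncard_le_one_of_subsingleton _
  obtain rfl : U = ∅ := (Set.ncard_eq_zero).1 (by omega)
  have hodd : Odd (G.induce (∅ : Set V)ᶜ).oddComponents.ncard := by
    rw [show (G.induce (∅ : Set V)ᶜ).oddComponents.ncard = 1 by omega]
    exact odd_one
  rw [SimpleGraph.odd_ncard_oddComponents] at hodd
  rw [Nat.card_coe_set_eq, Set.compl_empty, Set.ncard_univ] at hodd
  exact Nat.not_even_iff_odd.2 hodd hV

lemma ncard_preimage_add_ncard_compl_range_lt_of_isTutteViolator [Finite W] {U : Set W}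
    (f : G ↪g H) (hU : H.IsTutteViolator U) (hf : (Set.range f)ᶜ ⊆ U) :
    (f ⁻¹' U).ncard + (Set.range f)ᶜ.ncard < (G.induce (f ⁻¹' U)ᶜ).oddComponents.ncard := by
  have hcard : U.ncard = (f ⁻¹' U).ncard + (Set.range f)ᶜ.ncard := by
    rw [← Set.ncard_image_of_injective _ f.injective, Set.image_preimage_eq_inter_range,
      ← Set.ncard_inter_add_ncard_sdiff_eq_ncard U (Set.range f), Set.sdiff_eq,
      Set.inter_eq_right.2 hf]
  let e : G.induce (f ⁻¹' U)ᶜ ≃g H.induce Uᶜ :=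
    { toEquiv := Equiv.ofBijective (fun v => ⟨f v, v.2⟩)
        ⟨fun u v h => Subtype.ext (f.injective (congrArg Subtype.val h)), fun ⟨w, hw⟩ => by
          obtain ⟨v, rfl⟩ := not_not.1 (mt (@hf w) hw)
          exact ⟨⟨v, hw⟩, rfl⟩⟩
      map_rel_iff' := f.map_rel_iff' }
  rw [← hcard, ncard_oddComponents_eq_of_iso e]
  exact isTutteViolator_iff.1 hU

/-- Joining `G` to a clique on `d` new vertices gives a graph without a perfect matching, and the
new vertices are universal, so every Tutte violator contains them. -/
lemma exists_ncard_add_lt_ncard_oddComponents [Finite V] {d : ℕ}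
    (hd : 2 * matchingNumber G + d < Nat.card V) (heven : Even (Nat.card V + d)) :
    ∃ A : Set V, A.ncard + d < (G.induce Aᶜ).oddComponents.ncard := by
  let J : SimpleGraph (V ⊕ Fin d) := (G ⊕g ⊤) ⊔ completeBipartiteGraph V (Fin d)
  let f : G ↪g J := ⟨.inl, by simp [J]⟩
  have hf : (Set.range f)ᶜ = Set.range Sum.inr := Set.isCompl_range_inl_range_inr.compl_eq
  have hf_card : (Set.range f)ᶜ.ncard = d := by
    rw [hf, Set.ncard_range_of_injective Sum.inr_injective, Nat.card_fin]
  have hno : ¬∃ M : J.Subgraph, M.IsPerfectMatching := by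
    rintro ⟨M, hM⟩
    have := card_le_two_mul_matchingNumber_add_ncard_compl_range f hM
    omega
  simp only [SimpleGraph.tutte, not_forall, not_not] at hno
  obtain ⟨U, hU⟩ := hno
  have huniv : (Set.range f)ᶜ ⊆ J.universalVerts := by
    rw [hf]
    rintro _ ⟨i, rfl⟩ (v | k) hne
    · simp [J]
    · simpa [J] using fun h => hne (congrArg Sum.inr h)
  have hJ : Even (Nat.card (V ⊕ Fin d)) := by rwa [Nat.card_sum, Nat.card_fin]
  have hlt := ncard_preimage_add_ncard_compl_range_lt_of_isTutteViolator f hU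
    (huniv.trans (universalVerts_subset_of_isTutteViolator hJ hU))
  rw [hf_card] at hlt
  exact ⟨_, hlt⟩

/-- The harder half of the Tutte–Berge formula. -/
theorem exists_card_add_ncard_le_two_mul_matchingNumber_add_ncard_oddComponents [Finite V]
    (G : SimpleGraph V) :
    ∃ A : Set V, Nat.card V + A.ncard ≤
      2 * matchingNumber G + (G.induce Aᶜ).oddComponents.ncard := by
  have hparity (A : Set V) :
      (G.induce Aᶜ).oddComponents.ncard % 2 = 1 ↔ (Nat.card V - A.ncard) % 2 = 1 := by
    rw [← Nat.odd_iff, ← Nat.odd_iff, SimpleGraph.odd_ncard_oddComponents, Nat.card_coe_set_eq,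
      Set.ncard_compl]
  rcases le_or_gt (Nat.card V) (2 * matchingNumber G + 1) with hsmall | hlarge
  · have := hparity ∅
    rw [Set.ncard_empty] at this
    exact ⟨∅, by rw [Set.ncard_empty]; omega⟩
  · obtain ⟨A, hA⟩ := exists_ncard_add_lt_ncard_oddComponents (G := G)
      (d := Nat.card V - 2 * matchingNumber G - 2) (by omega) (Nat.even_iff.2 (by omega))
    have := A.ncard_le_card
    have := hparity A
    exact ⟨A, by omega⟩

lemma sum_ncard_supp [Finite V] [Fintype G.ConnectedComponent] :
    ∑ C : G.ConnectedComponent, C.supp.ncard = Nat.card V := by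
  cases nonempty_fintype V
  rw [Nat.card_eq_fintype_card, ← Finset.card_univ, Finset.card_eq_sum_card_fiberwise
    (f := G.connectedComponentMk) (t := Finset.univ) (by simp)]
  refine Finset.sum_congr rfl fun C _ => ?_
  rw [Set.ncard_eq_toFinset_card']
  congr 1
  ext v
  simp

lemma two_mul_sum_ncard_supp_div_two_add_ncard_oddComponents [Finite V]
    [Fintype G.ConnectedComponent] :
    2 * ∑ C : G.ConnectedComponent, C.supp.ncard / 2 + G.oddComponents.ncard = Nat.card V := by
  have hodd : G.oddComponents.ncard = ∑ C : G.ConnectedComponent, C.supp.ncard % 2 := by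
    rw [Set.ncard_eq_toFinset_card', Finset.card_eq_sum_ones, Set.toFinset_ofPred,
      Finset.sum_filter]
    refine Finset.sum_congr rfl fun C _ => ?_
    split_ifs with hC
    · exact (Nat.odd_iff.1 hC).symm
    · exact (Nat.even_iff.1 (Nat.not_odd_iff_even.1 hC)).symm
  rw [hodd, Finset.mul_sum, ← Finset.sum_add_distrib, ← sum_ncard_supp (G := G)]
  exact Finset.sum_congr rfl fun C _ => Nat.div_add_mod _ 2

theorem exists_ncard_add_sum_ncard_supp_div_two_le_matchingNumber [Fintype V]
    (G : SimpleGraph V) : ∃ A : Set V,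
      A.ncard + ∑ C : (G.induce Aᶜ).ConnectedComponent, C.supp.ncard / 2 ≤ matchingNumber G := by
  obtain ⟨A, hA⟩ :=
    exists_card_add_ncard_le_two_mul_matchingNumber_add_ncard_oddComponents G
  have hsum := two_mul_sum_ncard_supp_div_two_add_ncard_oddComponents (G := G.induce Aᶜ)
  have hcompl := Set.ncard_add_ncard_compl A
  rw [Nat.card_coe_set_eq] at hsum
  exact ⟨A, by omega⟩

end TutteBerge

section EdgeBound

variable {V : Type*} {G : SimpleGraph V} {Δ j : ℕ}

lemma degree_add_one_le_ncard_supp [Finite V] (v : V) [Fintype (G.neighborSet v)] :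
    G.degree v + 1 ≤ (G.connectedComponentMk v).supp.ncard := by
  have hsub : insert v (G.neighborSet v) ⊆ (G.connectedComponentMk v).supp := by
    rintro w (rfl | hw)
    · exact SimpleGraph.ConnectedComponent.connectedComponentMk_mem
    · exact SimpleGraph.ConnectedComponent.sound (SimpleGraph.Adj.reachable hw).symm
  calc G.degree v + 1 = (insert v (G.neighborSet v)).ncard := by
        rw [Set.ncard_insert_of_notMem G.notMem_neighborSet_self, ← Nat.card_coe_set_eq,
          Nat.card_eq_fintype_card, G.card_neighborSet_eq_degree]
    _ ≤ (G.connectedComponentMk v).supp.ncard := Set.ncard_le_ncard hsub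

variable [Fintype V]

lemma sum_degree_supp_le (hΔ : ∀ v, G.degree v ≤ Δ) (C : G.ConnectedComponent)
    (hC : Odd C.supp.ncard → C.supp.ncard ≤ Δ) :
    ∑ v with G.connectedComponentMk v = C, G.degree v ≤ 2 * (C.supp.ncard / 2 * Δ) := by
  have hcard : ({v | G.connectedComponentMk v = C} : Finset V).card = C.supp.ncard := by
    rw [Set.ncard_eq_toFinset_card']
    congr 1
    ext v
    simp
  rcases Nat.even_or_odd' C.supp.ncard with ⟨k, hk | hk⟩
  · calc ∑ v with G.connectedComponentMk v = C, G.degree v ≤ C.supp.ncard * Δ := by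
          rw [← hcard]
          exact Finset.sum_le_card_nsmul _ _ _ fun v _ => hΔ v
      _ = 2 * (C.supp.ncard / 2 * Δ) := by
          rw [hk, Nat.mul_div_cancel_left k two_pos, mul_assoc]
  · have hdeg : ∀ v ∈ ({v | G.connectedComponentMk v = C} : Finset V), G.degree v ≤ 2 * k := by
      intro v hv
      have := degree_add_one_le_ncard_supp (G := G) v
      rw [(Finset.mem_filter.1 hv).2, hk] at this
      omega
    calc ∑ v with G.connectedComponentMk v = C, G.degree v ≤ C.supp.ncard * (2 * k) := by
          rw [← hcard]
          exact Finset.sum_le_card_nsmul _ _ _ hdeg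
      _ ≤ Δ * (2 * k) := Nat.mul_le_mul_right _ (hC (hk ▸ odd_two_mul_add_one k))
      _ = 2 * (C.supp.ncard / 2 * Δ) := by
          rw [show C.supp.ncard / 2 = k by omega]
          ring

lemma ncard_edgeSet_le_sum_ncard_supp_div_two_mul [Fintype G.ConnectedComponent]
    (hΔ : ∀ v, G.degree v ≤ Δ)
    (hodd : ∀ C : G.ConnectedComponent, Odd C.supp.ncard → C.supp.ncard ≤ Δ) :
    G.edgeSet.ncard ≤ (∑ C : G.ConnectedComponent, C.supp.ncard / 2) * Δ := by
  have hsum : 2 * G.edgeSet.ncard ≤ 2 * ((∑ C : G.ConnectedComponent, C.supp.ncard / 2) * Δ) := by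
    calc 2 * G.edgeSet.ncard = ∑ v, G.degree v := by
          rw [← SimpleGraph.coe_edgeFinset, Set.ncard_coe_finset,
            SimpleGraph.sum_degrees_eq_twice_card_edges]
      _ = ∑ C, ∑ v with G.connectedComponentMk v = C, G.degree v :=
          (Finset.sum_fiberwise _ _ _).symm
      _ ≤ ∑ C : G.ConnectedComponent, 2 * (C.supp.ncard / 2 * Δ) :=
          Finset.sum_le_sum fun C _ => sum_degree_supp_le hΔ C (hodd C)
      _ = 2 * ((∑ C : G.ConnectedComponent, C.supp.ncard / 2) * Δ) := by
          rw [Finset.sum_mul, Finset.mul_sum]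
  omega

lemma exists_lt_ncard_supp_of_mul_lt_ncard_edgeSet (hΔ : ∀ v, G.degree v ≤ Δ) (A : Set V)
    (hE : (A.ncard + ∑ C : (G.induce Aᶜ).ConnectedComponent, C.supp.ncard / 2) * Δ <
      G.edgeSet.ncard) :
    ∃ C : (G.induce Aᶜ).ConnectedComponent, Odd C.supp.ncard ∧ Δ < C.supp.ncard := by
  by_contra! hodd
  have hdeg (v : ↥Aᶜ) : (G.induce Aᶜ).degree v ≤ Δ := by
    refine le_trans ?_ (hΔ v)
    rw [← SimpleGraph.card_neighborSet_eq_degree, ← SimpleGraph.card_neighborSet_eq_degree]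
    exact Fintype.card_le_of_embedding
      ((SimpleGraph.Embedding.induce (G := G) Aᶜ).mapNeighborSet v)
  have hcover := ncard_edgeSet_le_mul_add_ncard_edgeSet_comap (G := G)
    (Function.Embedding.subtype (· ∈ Aᶜ)) fun v _ => hΔ v
  have hcomp := ncard_edgeSet_le_sum_ncard_supp_div_two_mul hdeg hodd
  rw [Function.Embedding.coe_subtype, Subtype.range_coe, compl_compl] at hcover
  rw [add_mul] at hE
  exact hE.not_ge (hcover.trans (Nat.add_le_add_left hcomp _))

lemma card_eq_of_ncard_add_sum_ncard_supp_div_two_le (hiso : ∀ v, 0 < G.degree v) {A : Set V}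
    (hA : A.ncard + ∑ C : (G.induce Aᶜ).ConnectedComponent, C.supp.ncard / 2 ≤ j)
    {C₀ : (G.induce Aᶜ).ConnectedComponent} (hC₀ : 2 * j + 1 ≤ C₀.supp.ncard) :
    Fintype.card V = 2 * j + 1 := by
  have hsplit := Finset.add_sum_erase Finset.univ
    (fun C : (G.induce Aᶜ).ConnectedComponent => C.supp.ncard / 2) (Finset.mem_univ C₀)
  have hrest := Finset.sum_eq_zero_iff.1 (show
    ∑ C ∈ Finset.univ.erase C₀, C.supp.ncard / 2 = 0 by omega)
  have hA_empty : A = ∅ := (Set.ncard_eq_zero).1 (by omega)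
  have hmem (v : ↥Aᶜ) : v ∈ C₀.supp := by
    by_contra hv
    have hsmall := hrest _ (Finset.mem_erase.2 ⟨hv, Finset.mem_univ _⟩)
    obtain ⟨w, hw⟩ := (G.degree_pos_iff_exists_adj v).1 (hiso v)
    have hpos : 0 < (G.induce Aᶜ).degree v :=
      ((G.induce Aᶜ).degree_pos_iff_exists_adj v).2 ⟨⟨w, by simp [hA_empty]⟩, hw⟩
    have := degree_add_one_le_ncard_supp (G := G.induce Aᶜ) v
    omega
  have hcard : C₀.supp.ncard = Fintype.card V := by
    rw [Set.eq_univ_of_forall hmem, Set.ncard_univ, Nat.card_coe_set_eq, hA_empty, Set.compl_empty,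
      Set.ncard_univ, Nat.card_eq_fintype_card]
  omega

theorem card_eq_of_mul_lt_ncard_edgeSet (hiso : ∀ v, 0 < G.degree v)
    (hΔ : ∀ v, G.degree v ≤ 2 * j - 1) (hν : matchingNumber G ≤ j)
    (hE : j * (2 * j - 1) < G.edgeSet.ncard) : Fintype.card V = 2 * j + 1 := by
  obtain ⟨A, hA⟩ := exists_ncard_add_sum_ncard_supp_div_two_le_matchingNumber G
  obtain ⟨C₀, hodd, hC₀⟩ := exists_lt_ncard_supp_of_mul_lt_ncard_edgeSet hΔ A
    ((Nat.mul_le_mul_right _ (hA.trans hν)).trans_lt hE)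
  rw [Nat.odd_iff] at hodd
  exact card_eq_of_ncard_add_sum_ncard_supp_div_two_le hiso (hA.trans hν) (C₀ := C₀) (by omega)

end EdgeBound

section Degrees

variable {ι : Type*} [Fintype ι] {d : ι → ℕ} {k : ℕ}

lemma exists_add_one_eq_and_forall_ne_eq_of_sum_add_one_eq (hd : ∀ i, d i ≤ k)
    (hsum : ∑ i, d i + 1 = Fintype.card ι * k) :
    ∃ i₀, d i₀ + 1 = k ∧ ∀ i ≠ i₀, d i = k := by
  have hdeficit : ∑ i, (k - d i) = 1 := by
    have : ∑ i, (d i + (k - d i)) = Fintype.card ι * k := by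
      simp [Nat.add_sub_cancel' (hd _)]
    rw [Finset.sum_add_distrib] at this
    omega
  obtain ⟨i₀, -, hi₀⟩ := Finset.exists_ne_zero_of_sum_ne_zero (hdeficit ▸ one_ne_zero)
  have hsplit := Finset.add_sum_erase Finset.univ (fun i => k - d i) (Finset.mem_univ i₀)
  have hrest := Finset.sum_eq_zero_iff.1 (show
    ∑ i ∈ Finset.univ.erase i₀, (k - d i) = 0 by omega)
  refine ⟨i₀, by have := hd i₀; omega, fun i hi => ?_⟩
  have := hrest i (Finset.mem_erase.2 ⟨hi, Finset.mem_univ i⟩)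
  have := hd i
  omega

end Degrees

section Involutions

open Equiv

variable {α β : Type*} [Finite α] {f : α → α} {g : β → β}

lemma isConj_of_sq_eq_one_of_ncard_fixedPoints_eq {σ τ : Perm α} (hσ : σ ^ 2 = 1) (hτ : τ ^ 2 = 1)
    (h : (Function.fixedPoints σ).ncard = (Function.fixedPoints τ).ncard) : IsConj σ τ := by
  cases nonempty_fintype α
  rw [Perm.isConj_iff_cycleType_eq]
  have hsum : σ.cycleType.sum = τ.cycleType.sum := by
    rw [← Nat.card_coe_set_eq, ← Nat.card_coe_set_eq, Nat.card_eq_fintype_card,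
      Nat.card_eq_fintype_card, Perm.card_fixedPoints, Perm.card_fixedPoints] at h
    have := σ.sum_cycleType_le
    have := τ.sum_cycleType_le
    omega
  rw [Perm.cycleType_of_pow_prime_eq_one hσ, Perm.cycleType_of_pow_prime_eq_one hτ,
    Multiset.sum_replicate, Multiset.sum_replicate] at hsum
  rw [Perm.cycleType_of_pow_prime_eq_one hσ, Perm.cycleType_of_pow_prime_eq_one hτ,
    Nat.eq_of_mul_eq_mul_right two_pos hsum]

lemma exists_equiv_semiconj_of_involutive (hf : f.Involutive) (hg : g.Involutive)
    (hαβ : Nonempty (α ≃ β))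
    (hfix : (Function.fixedPoints f).ncard = (Function.fixedPoints g).ncard) :
    ∃ e : α ≃ β, Function.Semiconj e f g := by
  obtain ⟨e⟩ := hαβ
  have hsq {h : α → α} (hh : h.Involutive) : hh.toPerm ^ 2 = 1 := by
    ext x
    simp [sq, hh x]
  have hg' : Function.Involutive (e.symm ∘ g ∘ e) := fun x => by simp [hg (e x)]
  have hfix' : (Function.fixedPoints (e.symm ∘ g ∘ e)).ncard = (Function.fixedPoints g).ncard := by
    have hpre : Function.fixedPoints (e.symm ∘ g ∘ e) = e ⁻¹' Function.fixedPoints g := by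
      ext x
      simp [Function.IsFixedPt, symm_apply_eq]
    rw [hpre, Set.ncard_preimage_of_injective_subset_range e.injective (by simp)]
  obtain ⟨π, hπ⟩ := isConj_iff.1
    (isConj_of_sq_eq_one_of_ncard_fixedPoints_eq (hsq hf) (hsq hg') (hfix.trans hfix'.symm))
  refine ⟨π.trans e, fun x => ?_⟩
  have := DFunLike.congr_fun hπ (π x)
  simpa using congrArg e this

lemma exists_equiv_semiconj_apply_eq {a : α} {b : β} (hf : f.Involutive) (hg : g.Involutive)
    (hαβ : Nonempty (α ≃ β))
    (hfix : (Function.fixedPoints f).ncard = (Function.fixedPoints g).ncard)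
    (ha : f a = a) (hb : g b = b) :
    ∃ e : α ≃ β, Function.Semiconj e f g ∧ e a = b := by
  obtain ⟨e, he⟩ := exists_equiv_semiconj_of_involutive hf hg hαβ hfix
  refine ⟨e.trans (swap (e a) b), fun x => ?_, by simp⟩
  have hea : g (e a) = e a := by rw [← he a, ha]
  have hgx := hg (e x)
  simp only [trans_apply, he x, swap_apply_def]
  grind

end Involutions

section Uniqueness

variable {V W : Type*} {G : SimpleGraph V} {H : SimpleGraph W} {v₀ : V} {w₀ : W}

lemma nonempty_iso_of_nonempty_compl_iso_compl : Nonempty (Gᶜ ≃g Hᶜ) → Nonempty (G ≃g H) := by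
  rintro ⟨e⟩
  refine ⟨⟨e.toEquiv, fun {u v} => ?_⟩⟩
  have hcompl := e.map_adj_iff (v := u) (w := v)
  rw [SimpleGraph.compl_adj, SimpleGraph.compl_adj, e.injective.ne_iff] at hcompl
  rcases eq_or_ne u v with rfl | huv
  · simp
  · exact not_iff_not.1 (by simpa [huv] using hcompl)

lemma exists_involutive_adj_iff [G.LocallyFinite] (hdeg : ∀ v ≠ v₀, G.degree v = 1) :
    ∃ σ : V → V, σ.Involutive ∧ Function.fixedPoints σ = insert v₀ (G.neighborSet v₀) ∧
      ∀ u v, G.Adj u v ↔ u ≠ v ∧ (σ u = v ∨ u = v₀ ∧ σ v = v ∨ v = v₀ ∧ σ u = u) := by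
  choose! partner hadj huniq using fun v hv =>
    SimpleGraph.degree_eq_one_iff_existsUnique_adj.1 (hdeg v hv)
  let σ (v : V) : V := if v = v₀ ∨ G.Adj v₀ v then v else partner v
  have hσ_adj (v : V) (hv : ¬(v = v₀ ∨ G.Adj v₀ v)) : G.Adj v (σ v) := by
    simpa only [σ, if_neg hv] using hadj v (mt .inl hv)
  have hσ_fix (v : V) : σ v = v ↔ v = v₀ ∨ G.Adj v₀ v :=
    ⟨fun hv => by_contra fun h => (hσ_adj v h).ne hv.symm, fun hv => if_pos hv⟩
  have hσ_eq (u v : V) (hu : u ≠ v₀) (hv : v ≠ v₀) (huv : G.Adj u v) : σ u = v := by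
    have hu' : ¬G.Adj v₀ u := fun h => hv <|
      (huniq u hu v huv).trans (huniq u hu v₀ h.symm).symm
    simpa [σ, hu, hu'] using (huniq u hu v huv).symm
  refine ⟨σ, fun v => ?_, Set.ext hσ_fix, fun u v => ⟨fun huv => ⟨huv.ne, ?_⟩, ?_⟩⟩
  · by_cases hv : v = v₀ ∨ G.Adj v₀ v
    · rw [(hσ_fix v).2 hv, (hσ_fix v).2 hv]
    · have hσv : σ v ≠ v₀ := fun h => hv (.inr (h ▸ hσ_adj v hv).symm)
      exact hσ_eq _ _ hσv (mt .inl hv) (hσ_adj v hv).symm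
  · rcases eq_or_ne u v₀ with rfl | hu
    · exact .inr (.inl ⟨rfl, (hσ_fix v).2 (.inr huv)⟩)
    · rcases eq_or_ne v v₀ with rfl | hv
      · exact .inr (.inr ⟨rfl, (hσ_fix u).2 (.inr huv.symm)⟩)
      · exact .inl (hσ_eq u v hu hv huv)
  · rintro ⟨hne, rfl | ⟨rfl, hv⟩ | ⟨rfl, hu⟩⟩
    · exact hσ_adj u (mt (hσ_fix u).2 hne.symm)
    · exact ((hσ_fix v).1 hv).resolve_left hne.symm
    · exact (((hσ_fix u).1 hu).resolve_left hne).symm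

theorem nonempty_iso_of_forall_degree_eq_one [Finite V] [G.LocallyFinite] [H.LocallyFinite]
    (hVW : Nonempty (V ≃ W))
    (hv₀ : G.degree v₀ = H.degree w₀) (hG : ∀ v ≠ v₀, G.degree v = 1)
    (hH : ∀ w ≠ w₀, H.degree w = 1) : Nonempty (G ≃g H) := by
  obtain ⟨σ, hσ, hσ_fix, hσ_adj⟩ := exists_involutive_adj_iff hG
  obtain ⟨τ, hτ, hτ_fix, hτ_adj⟩ := exists_involutive_adj_iff hH
  have hncard : (Function.fixedPoints σ).ncard = (Function.fixedPoints τ).ncard := by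
    rw [hσ_fix, hτ_fix, Set.ncard_insert_of_notMem G.notMem_neighborSet_self,
      Set.ncard_insert_of_notMem H.notMem_neighborSet_self, ← Nat.card_coe_set_eq,
      ← Nat.card_coe_set_eq, Nat.card_eq_fintype_card, Nat.card_eq_fintype_card,
      G.card_neighborSet_eq_degree, H.card_neighborSet_eq_degree, hv₀]
  have hv₀_fix : v₀ ∈ Function.fixedPoints σ := hσ_fix ▸ Set.mem_insert _ _
  have hw₀_fix : w₀ ∈ Function.fixedPoints τ := hτ_fix ▸ Set.mem_insert _ _
  obtain ⟨e, he, he₀⟩ := exists_equiv_semiconj_apply_eq hσ hτ hVW hncard hv₀_fix hw₀_fix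
  refine ⟨⟨e, fun {u v} => ?_⟩⟩
  rw [hσ_adj, hτ_adj, ← he u, ← he v, ← he₀]
  simp only [ne_eq, e.apply_eq_iff_eq]

end Uniqueness

section OddExtremalGraph

variable {V : Type*} [Fintype V] {G : SimpleGraph V} {v₀ : V} {j : ℕ}

lemma compl_oddExtremalGraph_adj_iff {a b : Fin (2 * j + 1)} :
    (oddExtremalGraph j)ᶜ.Adj a b ↔ a ≠ b ∧
      (a.val / 2 = b.val / 2 ∨ a.val + 1 = 2 * j ∧ b.val = 2 * j ∨
        a.val = 2 * j ∧ b.val + 1 = 2 * j) := by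
  rw [SimpleGraph.compl_adj, oddExtremalGraph, SimpleGraph.fromRel_adj, ne_eq, Fin.ext_iff]
  omega

lemma degree_compl_oddExtremalGraph_eq_one {a : Fin (2 * j + 1)}
    [Fintype ((oddExtremalGraph j)ᶜ.neighborSet a)] (hj : j ≠ 0) (ha : a.val + 1 ≠ 2 * j) :
    (oddExtremalGraph j)ᶜ.degree a = 1 := by
  rw [SimpleGraph.degree_eq_one_iff_existsUnique_adj]
  let b : Fin (2 * j + 1) :=
    ⟨if a.val % 2 = 0 ∧ a.val < 2 * j then a.val + 1 else a.val - 1, by split_ifs <;> omega⟩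
  refine ⟨b, ?_, fun c hc => ?_⟩
  · simp only [compl_oddExtremalGraph_adj_iff, ne_eq, Fin.ext_iff, b]
    split_ifs <;> omega
  · simp only [compl_oddExtremalGraph_adj_iff, ne_eq, Fin.ext_iff, b] at hc ⊢
    split_ifs <;> omega

lemma degree_compl_oddExtremalGraph_eq_two {a : Fin (2 * j + 1)}
    [Fintype ((oddExtremalGraph j)ᶜ.neighborSet a)] (ha : a.val + 1 = 2 * j) :
    (oddExtremalGraph j)ᶜ.degree a = 2 := by
  have hneighbors : (oddExtremalGraph j)ᶜ.neighborFinset a =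
      {⟨2 * j - 2, by omega⟩, ⟨2 * j, by omega⟩} := by
    ext b
    simp only [SimpleGraph.mem_neighborFinset, compl_oddExtremalGraph_adj_iff, ne_eq, Fin.ext_iff,
      Finset.mem_insert, Finset.mem_singleton]
    omega
  rw [← SimpleGraph.card_neighborFinset_eq_degree, hneighbors, Finset.card_pair]
  simp only [ne_eq, Fin.mk.injEq]
  omega

theorem nonempty_iso_oddExtremalGraph (hj : j ≠ 0) (hcard : Fintype.card V = 2 * j + 1)
    (hv₀ : G.degree v₀ = 2 * j - 2) (hdeg : ∀ v ≠ v₀, G.degree v = 2 * j - 1) :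
    Nonempty (G ≃g oddExtremalGraph j) := by
  obtain ⟨w₀, hw₀⟩ : ∃ w₀ : Fin (2 * j + 1), w₀.val + 1 = 2 * j :=
    ⟨⟨2 * j - 1, by omega⟩, Nat.sub_add_cancel (by omega)⟩
  refine nonempty_iso_of_nonempty_compl_iso_compl <|
    nonempty_iso_of_forall_degree_eq_one (v₀ := v₀) (w₀ := w₀)
      (Fintype.card_eq.1 (by rw [hcard, Fintype.card_fin])) ?_ (fun v hv => ?_) fun w hw => ?_
  · rw [degree_compl_oddExtremalGraph_eq_two hw₀, G.degree_compl, hcard, hv₀]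
    omega
  · rw [G.degree_compl, hcard, hdeg v hv]
    omega
  · have hw' : w.val + 1 ≠ 2 * j := fun h => hw (Fin.ext (by omega))
    exact degree_compl_oddExtremalGraph_eq_one hj hw'

end OddExtremalGraph

theorem stmt_5 {V : Type*} [Fintype V] (G : SimpleGraph V) (j : ℕ) (hj : 2 ≤ j)
    (hiso : ∀ v : V, 0 < G.degree v)
    (hν : matchingNumber G = j)
    (hmax : G.maxDegree = 2 * j - 1)
    (hE : G.edgeFinset.card = (2 * j - 1) * j + j - 1) :
    (∃ v₀ : V, G.degree v₀ = 2 * j - 2 ∧ ∀ v : V, v ≠ v₀ → G.degree v = 2 * j - 1) ∧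
    Nonempty (G ≃g oddExtremalGraph j) := by
  have hdeg (v : V) : G.degree v ≤ 2 * j - 1 := hmax ▸ G.degree_le_maxDegree v
  have hcard : Fintype.card V = 2 * j + 1 := by
    refine card_eq_of_mul_lt_ncard_edgeSet hiso hdeg hν.le ?_
    rw [← SimpleGraph.coe_edgeFinset, Set.ncard_coe_finset, hE, mul_comm]
    omega
  have hsum : ∑ v, G.degree v + 1 = Fintype.card V * (2 * j - 1) := by
    obtain ⟨i, rfl⟩ := Nat.exists_eq_add_of_le hj
    rw [G.sum_degrees_eq_twice_card_edges, hE, hcard, show 2 * (2 + i) - 1 = 2 * i + 3 by omega,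
      Nat.add_sub_assoc (by omega), show 2 + i - 1 = i + 1 by omega]
    ring
  obtain ⟨v₀, hv₀, hrest⟩ := exists_add_one_eq_and_forall_ne_eq_of_sum_add_one_eq hdeg hsum
  have hv₀ : G.degree v₀ = 2 * j - 2 := by omega
  exact ⟨⟨v₀, hv₀, hrest⟩, nonempty_iso_oddExtremalGraph (by omega) hcard hv₀ hrest⟩
end

section
/- If G is a friendly-edge-colorable simple graph, then every non-trivial connected component C of G is friendly-edge-colorable and satisfies χ'(C) = χ'(G). -/
open scoped Classical

/-!
A maximum matching of `G` meets a union `H` of components in a maximum matching of `H`: a larger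
matching of `H` could be exchanged for that part, since no edge leaves `H`. So a partition of `E(G)`
into maximum matchings restricts to one of `E(H)`, and it has as many parts as before because
maximum matchings of a graph with edges are nonempty. Finally, a graph with edges that is
partitioned into `k` maximum matchings has chromatic index `k`: the parts are colour classes, and
since no colour class is larger than a part, fewer colours cannot cover all the edges.
-/

section

variable {V W : Type*} {G : SimpleGraph V} {H : SimpleGraph W}

namespace IsMatchingFinset

variable {M N : Finset (Sym2 V)}

theorem mono (hN : IsMatchingFinset G N) (hMN : M ⊆ N) : IsMatchingFinset G M :=
  ⟨fun _ he ↦ hN.1 (hMN he), fun e he f hf ↦ hN.2 e (hMN he) f (hMN hf)⟩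

theorem union (hM : IsMatchingFinset G M) (hN : IsMatchingFinset G N)
    (hMN : ∀ e ∈ M, ∀ f ∈ N, ∀ v, ¬(v ∈ e ∧ v ∈ f)) : IsMatchingFinset G (M ∪ N) := by
  refine ⟨by simpa only [Finset.coe_union] using Set.union_subset hM.1 hN.1, ?_⟩
  intro e he f hf hef v hv
  rcases Finset.mem_union.1 he with he | he <;> rcases Finset.mem_union.1 hf with hf | hf
  · exact hM.2 e he f hf hef v hv
  · exact hMN e he f hf v hv
  · exact hMN f hf e he v hv.symm
  · exact hN.2 e he f hf hef v hv

theorem singleton {e : Sym2 V} (he : e ∈ G.edgeSet) : IsMatchingFinset G {e} := by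
  refine ⟨by simpa only [Finset.coe_singleton, Set.singleton_subset_iff] using he, ?_⟩
  intro a ha b hb hab
  exact absurd ((Finset.mem_singleton.1 ha).trans (Finset.mem_singleton.1 hb).symm) hab

theorem image {N : Finset (Sym2 W)} (hN : IsMatchingFinset H N) (f : H →g G)
    (hf : Function.Injective f) : IsMatchingFinset G (N.image (Sym2.map f)) := by
  constructor
  · intro e he
    obtain ⟨a, ha, rfl⟩ := Finset.mem_image.1 he
    exact f.map_mem_edgeSet (hN.1 ha)
  · rintro e he e' he' hne v ⟨hve, hve'⟩
    obtain ⟨a, ha, rfl⟩ := Finset.mem_image.1 he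
    obtain ⟨b, hb, rfl⟩ := Finset.mem_image.1 he'
    obtain ⟨w, hwa, rfl⟩ := Sym2.mem_map.1 hve
    obtain ⟨w', hwb, hww'⟩ := Sym2.mem_map.1 hve'
    rw [hf hww'] at hwb
    exact hN.2 a ha b hb (fun hab ↦ hne (congrArg _ hab)) w ⟨hwa, hwb⟩

end IsMatchingFinset

/-- The pullback of a set `M` of edges along an embedding of vertex sets. For an inclusion `W ⊆ V`
this is the restriction of `M` to the edges with both ends in `W`. -/
noncomputable def pullbackEdges (f : W ↪ V) (M : Finset (Sym2 V)) : Finset (Sym2 W) :=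
  M.preimage (Sym2.map f) (Sym2.map.injective f.injective).injOn

@[simp]
theorem mem_pullbackEdges {f : W ↪ V} {M : Finset (Sym2 V)} {e : Sym2 W} :
    e ∈ pullbackEdges f M ↔ e.map f ∈ M :=
  Finset.mem_preimage

theorem disjoint_pullbackEdges (f : W ↪ V) {M N : Finset (Sym2 V)} (h : Disjoint M N) :
    Disjoint (pullbackEdges f M) (pullbackEdges f N) := by
  simp only [Finset.disjoint_left, mem_pullbackEdges] at h ⊢
  exact fun _ he ↦ h he

theorem card_pullbackEdges_add_card_filter (f : W ↪ V) (M : Finset (Sym2 V)) :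
    (pullbackEdges f M).card + {e ∈ M | e ∉ Set.range (Sym2.map f)}.card = M.card := by
  rw [← Finset.card_image_of_injective _ (Sym2.map.injective f.injective), pullbackEdges,
    Finset.image_preimage, Finset.card_filter_add_card_filter_not]

theorem IsMatchingFinset.pullbackEdges {M : Finset (Sym2 V)} (hM : IsMatchingFinset G M)
    (f : H ↪g G) : IsMatchingFinset H (pullbackEdges f.toEmbedding M) := by
  constructor
  · intro e he
    exact f.map_mem_edgeSet_iff.1 (hM.1 (mem_pullbackEdges.1 he))
  · rintro e he e' he' hne v ⟨hve, hve'⟩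
    exact hM.2 _ (mem_pullbackEdges.1 he) _ (mem_pullbackEdges.1 he')
      (fun h ↦ hne (Sym2.map.injective f.injective h)) (f v)
      ⟨Sym2.mem_map.2 ⟨v, hve, rfl⟩, Sym2.mem_map.2 ⟨v, hve', rfl⟩⟩

theorem mem_range_sym2Map_of_mem_edgeSet {f : W → V}
    (hf : ∀ ⦃v w⦄, G.Adj v w → v ∈ Set.range f → w ∈ Set.range f) {e : Sym2 V}
    (he : e ∈ G.edgeSet) {v : V} (hve : v ∈ e) (hv : v ∈ Set.range f) :
    e ∈ Set.range (Sym2.map f) := by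
  obtain ⟨w, rfl⟩ := hve
  obtain ⟨a, rfl⟩ := hv
  obtain ⟨b, rfl⟩ := hf he ⟨a, rfl⟩
  exact ⟨s(a, b), rfl⟩

/-- `M` is a maximum matching of `G`, that is, no matching of `G` has more edges. On finite graphs
this says that `M` is a matching of size `matchingNumber G`; the latter has a junk value when the
sizes of matchings are unbounded. -/
structure IsMaximumMatching (G : SimpleGraph V) (M : Finset (Sym2 V)) : Prop where
  isMatching : IsMatchingFinset G M
  card_le : ∀ N, IsMatchingFinset G N → N.card ≤ M.card

theorem isMaximumMatching_iff_card_eq_matchingNumber [Finite G.edgeSet] {M : Finset (Sym2 V)} :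
    IsMaximumMatching G M ↔ IsMatchingFinset G M ∧ M.card = matchingNumber G := by
  constructor
  · intro hM
    have hgreatest : IsGreatest {n | ∃ N, IsMatchingFinset G N ∧ N.card = n} M.card :=
      ⟨⟨M, hM.isMatching, rfl⟩, by rintro _ ⟨N, hN, rfl⟩; exact hM.card_le N hN⟩
    exact ⟨hM.isMatching, hgreatest.csSup_eq.symm⟩
  · rintro ⟨hM, hcard⟩
    refine ⟨hM, fun N hN ↦ hcard ▸ le_csSup ⟨G.edgeSet.ncard, ?_⟩ ⟨N, hN, rfl⟩⟩
    rintro _ ⟨L, hL, rfl⟩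
    simpa only [Set.ncard_coe_finset] using Set.ncard_le_ncard hL.1

namespace IsMaximumMatching

variable {M N : Finset (Sym2 V)}

theorem card_eq_card (hM : IsMaximumMatching G M) (hN : IsMaximumMatching G N) :
    M.card = N.card :=
  (hN.card_le M hM.isMatching).antisymm (hM.card_le N hN.isMatching)

theorem nonempty (hM : IsMaximumMatching G M) (hG : G ≠ ⊥) : M.Nonempty := by
  obtain ⟨e, he⟩ := SimpleGraph.edgeSet_nonempty.2 hG
  exact Finset.card_pos.1 (hM.card_le {e} (.singleton he))

theorem pullbackEdges (hM : IsMaximumMatching G M) (f : H ↪g G)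
    (hf : ∀ ⦃v w⦄, G.Adj v w → v ∈ Set.range f → w ∈ Set.range f) :
    IsMaximumMatching H (pullbackEdges f.toEmbedding M) := by
  refine ⟨hM.isMatching.pullbackEdges f, fun N hN ↦ ?_⟩
  let outer := {e ∈ M | e ∉ Set.range (Sym2.map f)}
  let inner := N.image (Sym2.map f)
  have houter_inner : ∀ e ∈ outer, ∀ e' ∈ inner, ∀ v, ¬(v ∈ e ∧ v ∈ e') := by
    rintro e he e' he' v ⟨hve, hve'⟩
    obtain ⟨heM, he_range⟩ := Finset.mem_filter.1 he
    obtain ⟨a, -, rfl⟩ := Finset.mem_image.1 he'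
    obtain ⟨w, -, hwv⟩ := Sym2.mem_map.1 hve'
    exact he_range (mem_range_sym2Map_of_mem_edgeSet hf (hM.isMatching.1 heM) hve ⟨w, hwv⟩)
  have hdisjoint : Disjoint outer inner := Finset.disjoint_left.2 fun e he he' ↦
    houter_inner e he e he' e.out.1 ⟨e.out_fst_mem, e.out_fst_mem⟩
  have hexchange : IsMatchingFinset G (outer ∪ inner) :=
    (hM.isMatching.mono (Finset.filter_subset _ _)).union (hN.image f.toHom f.injective)
      houter_inner
  have hinner_card : inner.card = N.card :=
    Finset.card_image_of_injective _ (Sym2.map.injective f.injective)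
  have hM_card : (_root_.pullbackEdges f.toEmbedding M).card + outer.card = M.card :=
    card_pullbackEdges_add_card_filter f.toEmbedding M
  have hle := hM.card_le _ hexchange
  rw [Finset.card_union_of_disjoint hdisjoint] at hle
  omega

end IsMaximumMatching

theorem exists_isProperEdgeColoring_card (P : Finset (Finset (Sym2 V)))
    (hP : ∀ M ∈ P, IsMatchingFinset G M) (hcover : ∀ e ∈ G.edgeSet, ∃ M ∈ P, e ∈ M) :
    ∃ c : Sym2 V → ℕ, IsProperEdgeColoring G P.card c := by
  choose! part hpart hmem using hcover
  have hpart_list : ∀ e ∈ G.edgeSet, part e ∈ P.toList :=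
    fun e he ↦ Finset.mem_toList.2 (hpart e he)
  refine ⟨fun e ↦ P.toList.idxOf (part e), fun e he ↦ ?_, ?_⟩
  · rw [← Finset.length_toList]
    exact List.idxOf_lt_length_of_mem (hpart_list e he)
  · rintro e he f hf hne ⟨v, hv⟩ hcolor
    have hpart_eq : part e = part f := (List.idxOf_inj (hpart_list e he)).1 hcolor
    exact (hP _ (hpart e he)).2 e (hmem e he) f (hpart_eq ▸ hmem f hf) hne v hv

theorem IsProperEdgeColoring.isMatchingFinset_filter {n : ℕ} {c : Sym2 V → ℕ}
    (hc : IsProperEdgeColoring G n c) {E : Finset (Sym2 V)} (hE : ↑E ⊆ G.edgeSet) (i : ℕ) :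
    IsMatchingFinset G {e ∈ E | c e = i} := by
  constructor
  · intro e he
    exact hE (Finset.mem_filter.1 he).1
  · intro e he f hf hne v hv
    obtain ⟨heE, rfl⟩ := Finset.mem_filter.1 he
    obtain ⟨hfE, hcolor⟩ := Finset.mem_filter.1 hf
    exact hc.2 e (hE heE) f (hE hfE) hne ⟨v, hv⟩ hcolor.symm

theorem IsProperEdgeColoring.card_le_card_mul {n : ℕ} {c : Sym2 V → ℕ}
    (hc : IsProperEdgeColoring G n c) {E M : Finset (Sym2 V)} (hE : ↑E ⊆ G.edgeSet)
    (hM : IsMaximumMatching G M) : E.card ≤ M.card * n := by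
  simpa only [Finset.card_range] using Finset.card_le_mul_card_image_of_maps_to
    (t := Finset.range n) (fun e he ↦ Finset.mem_range.2 (hc.1 e (hE he))) M.card
    fun i _ ↦ hM.card_le _ (hc.isMatchingFinset_filter hE i)

/-- `P` is a partition of the edge set of `G` into maximum matchings. Unlike `Friendly`, which
asserts that there is one, this makes sense on infinite vertex sets. -/
structure IsMaximumMatchingPartition (G : SimpleGraph V) (P : Finset (Finset (Sym2 V))) :
    Prop where
  isMaximumMatching : ∀ M ∈ P, IsMaximumMatching G M
  mem_edgeSet_iff : ∀ e, e ∈ G.edgeSet ↔ ∃ M ∈ P, e ∈ M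
  pairwiseDisjoint : (P : Set (Finset (Sym2 V))).PairwiseDisjoint id

theorem friendly_iff_exists_isMaximumMatchingPartition [Fintype V] :
    Friendly G ↔ ∃ P, IsMaximumMatchingPartition G P := by
  simp only [Friendly, ← isMaximumMatching_iff_card_eq_matchingNumber, SimpleGraph.mem_edgeFinset]
  exact exists_congr fun P ↦ ⟨fun ⟨hmax, hmem, hdisj⟩ ↦ ⟨hmax, hmem, hdisj⟩,
    fun ⟨hmax, hmem, hdisj⟩ ↦ ⟨hmax, hmem, hdisj⟩⟩

namespace IsMaximumMatchingPartition

variable {P : Finset (Finset (Sym2 V))}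

theorem card_biUnion (hP : IsMaximumMatchingPartition G P) {M : Finset (Sym2 V)}
    (hM : IsMaximumMatching G M) : (P.biUnion id).card = M.card * P.card := by
  rw [Finset.card_biUnion hP.pairwiseDisjoint, mul_comm]
  exact Finset.sum_const_nat fun N hN ↦ (hP.isMaximumMatching N hN).card_eq_card hM

theorem chromaticIndex_eq_card (hP : IsMaximumMatchingPartition G P) (hG : G ≠ ⊥) :
    chromaticIndex G = P.card := by
  have hcolorable : ∃ c : Sym2 V → ℕ, IsProperEdgeColoring G P.card c :=
    exists_isProperEdgeColoring_card P (fun M hM ↦ (hP.isMaximumMatching M hM).isMatching)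
      fun e ↦ (hP.mem_edgeSet_iff e).1
  refine le_antisymm (Nat.sInf_le hcolorable) (le_csInf ⟨_, hcolorable⟩ ?_)
  rintro n ⟨c, hc⟩
  obtain ⟨e, he⟩ := SimpleGraph.edgeSet_nonempty.2 hG
  obtain ⟨M, hMP, heM⟩ := (hP.mem_edgeSet_iff e).1 he
  have hM := hP.isMaximumMatching M hMP
  have hedges : ↑(P.biUnion id) ⊆ G.edgeSet := fun e' he' ↦
    (hP.mem_edgeSet_iff e').2 (Finset.mem_biUnion.1 he')
  have hle : M.card * P.card ≤ M.card * n :=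
    hP.card_biUnion hM ▸ hc.card_le_card_mul hedges hM
  exact Nat.le_of_mul_le_mul_left hle (Finset.card_pos.2 ⟨e, heM⟩)

theorem image_pullbackEdges (hP : IsMaximumMatchingPartition G P) (f : H ↪g G)
    (hf : ∀ ⦃v w⦄, G.Adj v w → v ∈ Set.range f → w ∈ Set.range f) :
    IsMaximumMatchingPartition H (P.image (pullbackEdges f.toEmbedding)) where
  isMaximumMatching := Finset.forall_mem_image.2 fun M hM ↦
    (hP.isMaximumMatching M hM).pullbackEdges f hf
  mem_edgeSet_iff e := by
    rw [← f.map_mem_edgeSet_iff, hP.mem_edgeSet_iff]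
    simp only [Finset.exists_mem_image, mem_pullbackEdges, RelEmbedding.coe_toEmbedding]
  pairwiseDisjoint := by
    rw [Finset.coe_image]
    rintro _ ⟨M, hM, rfl⟩ _ ⟨N, hN, rfl⟩ hne
    exact disjoint_pullbackEdges _ (hP.pairwiseDisjoint hM hN (ne_of_apply_ne _ hne))

theorem injOn_pullbackEdges (hP : IsMaximumMatchingPartition G P) (f : H ↪g G)
    (hf : ∀ ⦃v w⦄, G.Adj v w → v ∈ Set.range f → w ∈ Set.range f) (hH : H ≠ ⊥) :
    Set.InjOn (pullbackEdges f.toEmbedding) (P : Set (Finset (Sym2 V))) := by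
  intro M hM N hN heq
  obtain ⟨e, heM⟩ := ((hP.isMaximumMatching M hM).pullbackEdges f hf).nonempty hH
  have heN : e ∈ pullbackEdges f.toEmbedding N := heq ▸ heM
  exact hP.pairwiseDisjoint.elim_finset hM hN _ (mem_pullbackEdges.1 heM) (mem_pullbackEdges.1 heN)

end IsMaximumMatchingPartition

theorem stmt_16_general (hG : ∃ P, IsMaximumMatchingPartition G P) (f : H ↪g G)
    (hf : ∀ ⦃v w⦄, G.Adj v w → v ∈ Set.range f → w ∈ Set.range f) (hH : H ≠ ⊥) :
    (∃ P, IsMaximumMatchingPartition H P) ∧ chromaticIndex H = chromaticIndex G := by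
  obtain ⟨P, hP⟩ := hG
  have hPH := hP.image_pullbackEdges f hf
  have hG_ne : G ≠ ⊥ := by
    obtain ⟨e, he⟩ := SimpleGraph.edgeSet_nonempty.2 hH
    exact SimpleGraph.edgeSet_nonempty.1 ⟨_, f.map_mem_edgeSet_iff.2 he⟩
  refine ⟨⟨_, hPH⟩, ?_⟩
  rw [hPH.chromaticIndex_eq_card hH, hP.chromaticIndex_eq_card hG_ne,
    Finset.card_image_of_injOn (hP.injOn_pullbackEdges f hf hH)]

end

theorem stmt_16 {V : Type*} [Fintype V] (G : SimpleGraph V) (hG : Friendly G) :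
    ∀ c : G.ConnectedComponent, (G.induce c.supp).edgeFinset.Nonempty →
      Friendly (G.induce c.supp) ∧ chromaticIndex (G.induce c.supp) = chromaticIndex G := by
  intro c hne
  rw [friendly_iff_exists_isMaximumMatchingPartition] at hG ⊢
  refine stmt_16_general hG (SimpleGraph.Embedding.induce c.supp) (fun v w hvw ↦ ?_)
    (SimpleGraph.edgeFinset_nonempty.1 hne)
  simpa using (c.mem_supp_congr_adj hvw).1
end
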